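/- arXiv:2510.22259 — 4 statements merged into one kernel-verified Lean document; each statement's English description precedes it below -/
import Mathlib

section
/- Let s ≥ 4. The code C_{(2,n,5,1)} has length n, dimension n − 8s, and minimum distance d satisfying 5 ≤ d ≤ 6. -/
open Finset

/-- The binary cyclic (BCH-type) code of length `n` over GF(2), consisting of all
words `c` such that `∑ i, c i • β ^ (j * i) = 0` for every `j` in the check set `J`. -/
def BCHCode {F : Type} [Field F] [Algebra (ZMod 2) F] (n : ℕ) (β : F) (J : Finset ℕ) :
    Submodule (ZMod 2) (Fin n → ZMod 2) where
  carrier := {c | ∀ j ∈ J, ∑ i : Fin n, c i • β ^ (j * (i : ℕ)) = 0}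
  add_mem' := by
    intro a b ha hb j hj
    simp only [Set.mem_setOf_eq, Pi.add_apply, add_smul, Finset.sum_add_distrib] at *
    rw [ha j hj, hb j hj, add_zero]
  zero_mem' := by
    intro j hj
    simp
  smul_mem' := by
    intro r c hc j hj
    simp only [Set.mem_setOf_eq, Pi.smul_apply, smul_assoc, ← Finset.smul_sum] at *
    rw [hc j hj, smul_zero]

/-- The (Euclidean) dual of a binary linear code. -/
def dualCode {N : ℕ} (C : Submodule (ZMod 2) (Fin N → ZMod 2)) :
    Submodule (ZMod 2) (Fin N → ZMod 2) where
  carrier := {b | ∀ c ∈ C, ∑ i, b i * c i = 0}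
  add_mem' := by
    intro a b ha hb c hc
    simp only [Set.mem_setOf_eq, Pi.add_apply, add_mul, Finset.sum_add_distrib] at *
    rw [ha c hc, hb c hc, add_zero]
  zero_mem' := by
    intro c hc
    simp
  smul_mem' := by
    intro r b hb c hc
    simp only [Set.mem_setOf_eq, Pi.smul_apply, smul_eq_mul, mul_assoc, ← Finset.mul_sum] at *
    rw [hb c hc, mul_zero]

/-- The linear map appending an overall parity-check coordinate. -/
def extendMap (N : ℕ) : (Fin N → ZMod 2) →ₗ[ZMod 2] (Fin (N + 1) → ZMod 2) where
  toFun c := fun j => if h : (j : ℕ) < N then c ⟨j, h⟩ else ∑ i, c i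
  map_add' a b := by
    funext j
    by_cases h : (j : ℕ) < N <;> simp [h, Finset.sum_add_distrib]
  map_smul' r c := by
    funext j
    by_cases h : (j : ℕ) < N <;> simp [h, Finset.mul_sum]

/-- The extended code of a binary linear code. -/
def extendedCode {N : ℕ} (C : Submodule (ZMod 2) (Fin N → ZMod 2)) :
    Submodule (ZMod 2) (Fin (N + 1) → ZMod 2) :=
  C.map (extendMap N)

/-- The minimum distance (= minimum nonzero Hamming weight) of a binary linear code. -/
noncomputable def minDist {N : ℕ} (C : Submodule (ZMod 2) (Fin N → ZMod 2)) : ℕ :=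
  sInf {w | ∃ c ∈ C, c ≠ 0 ∧ hammingNorm c = w}

/-- The number of codewords of Hamming weight `w` in a binary linear code. -/
noncomputable def weightCount {N : ℕ} (C : Submodule (ZMod 2) (Fin N → ZMod 2)) (w : ℕ) : ℕ :=
  Set.ncard {c : Fin N → ZMod 2 | c ∈ C ∧ hammingNorm c = w}

/-- The 2-cyclotomic coset of `i` modulo `n`. -/
def cycCoset (n i : ℕ) : Set ℕ := {x | ∃ j : ℕ, x = i * 2 ^ j % n}

/-- The coset leader (smallest element) of the 2-cyclotomic coset of `i` modulo `n`. -/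
noncomputable def cosetLeader (n i : ℕ) : ℕ := sInf (cycCoset n i)

/-!
A word `c` is identified with the polynomial `∑ i, c i * X ^ i`; it lies in the code exactly when
this polynomial is divisible by the minimal polynomials of `β` and `β ^ 3`. Write `q = 2 ^ s`.

* Dimension. The orders of `β` and `β ^ 3` are at least `q ^ 2`, the square root of the size of the
  field; this is too large for a proper subfield, so both minimal polynomials have degree `4 * s`.
  They are distinct, since otherwise `β ^ 3` would be a conjugate `β ^ 2 ^ k` of `β`; then
  `2 ^ k ≡ 3` modulo `n`, hence modulo `q - 1`, where the powers of two are only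
  `1, 2, …, 2 ^ (s - 1)`.
* Lower bound. The polynomial of a codeword vanishes at `β` and `β ^ 3`, hence by Frobenius also at
  `β ^ 2` and `β ^ 4`, and four consecutive zeros force weight at least five.
* Upper bound. There are more words of weight three than the `q ^ 8` cosets of the code, so two of
  them differ by a codeword.
-/

section MinDist

variable {N : ℕ} {C : Submodule (ZMod 2) (Fin N → ZMod 2)}

lemma minDist_le_hammingNorm {c : Fin N → ZMod 2} (hc : c ∈ C) (hc0 : c ≠ 0) :
    minDist C ≤ hammingNorm c :=
  Nat.sInf_le ⟨c, hc, hc0, rfl⟩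

lemma le_minDist {d : ℕ} (hC : C ≠ ⊥) (h : ∀ c ∈ C, c ≠ 0 → d ≤ hammingNorm c) :
    d ≤ minDist C := by
  obtain ⟨c, hc, hc0⟩ := C.ne_bot_iff.mp hC
  refine le_csInf ⟨_, c, hc, hc0, rfl⟩ ?_
  rintro _ ⟨b, hb, hb0, rfl⟩
  exact h b hb hb0

end MinDist

section SpherePacking

variable {ι R : Type*} [Fintype ι] [Ring R] [Nontrivial R] [DecidableEq R]

lemma hammingNorm_indicator_one (S : Finset ι) :
    hammingNorm ((S : Set ι).indicator (1 : ι → R)) = #S := by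
  classical
  simp [hammingNorm, Set.indicator_apply]

lemma exists_mem_hammingNorm_le_of_card_quotient_lt (C : Submodule R (ι → R))
    [Finite ((ι → R) ⧸ C)] {t : ℕ} (h : Nat.card ((ι → R) ⧸ C) < (Fintype.card ι).choose t) :
    ∃ c ∈ C, c ≠ 0 ∧ hammingNorm c ≤ 2 * t := by
  have := Fintype.ofFinite ((ι → R) ⧸ C)
  let word (S : Finset ι) : ι → R := (S : Set ι).indicator 1
  have hcard : #(univ : Finset ((ι → R) ⧸ C)) < #(powersetCard t (univ : Finset ι)) := by
    rwa [card_powersetCard, card_univ, card_univ, ← Nat.card_eq_fintype_card]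
  obtain ⟨S, hS, T, hT, hne, heq⟩ := exists_ne_map_eq_of_card_lt_of_maps_to hcard
    (f := fun S ↦ C.mkQ (word S)) (fun _ _ ↦ mem_coe.mpr (mem_univ _))
  refine ⟨-word S + word T, (Submodule.Quotient.eq' C).mp heq, fun h0 ↦ hne ?_, ?_⟩
  · exact coe_injective (Set.indicator_one_inj R (neg_add_eq_zero.mp h0))
  · calc hammingNorm (-word S + word T)
        = hammingDist (word S) (word T) := (hammingDist_eq_hammingNorm _ _).symm
      _ ≤ hammingDist (word S) 0 + hammingDist 0 (word T) := hammingDist_triangle _ _ _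
      _ = #S + #T := by
        rw [hammingDist_zero_right, hammingDist_zero_left, hammingNorm_indicator_one,
          hammingNorm_indicator_one]
      _ = 2 * t := by
        rw [(mem_powersetCard.mp hS).2, (mem_powersetCard.mp hT).2, two_mul]

lemma exists_mem_hammingNorm_le_of_card_pow_lt {K : Type*} [Field K] [Finite K] [DecidableEq K]
    (C : Submodule K (ι → K)) {t : ℕ}
    (h : Nat.card K ^ (Fintype.card ι - Module.finrank K C) < (Fintype.card ι).choose t) :
    ∃ c ∈ C, c ≠ 0 ∧ hammingNorm c ≤ 2 * t := by
  have : Finite ((ι → K) ⧸ C) := Module.finite_of_finite K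
  apply exists_mem_hammingNorm_le_of_card_quotient_lt
  rwa [Module.natCard_eq_pow_finrank (K := K), C.finrank_quotient,
    Module.finrank_fintype_fun_eq_card]

end SpherePacking

section PolynomialCode

open Polynomial

variable {K : Type*} [Field K]

lemma finrank_degreeLT (n : ℕ) : Module.finrank K (degreeLT K n) = n := by
  rw [(degreeLTEquiv K n).finrank_eq, Module.finrank_fin_fun]

lemma degreeLT_inf_span_singleton {g : K[X]} (hg : g ≠ 0) (n : ℕ) :
    degreeLT K n ⊓ (Ideal.span {g}).restrictScalars K =
      (degreeLT K (n - g.natDegree)).map (LinearMap.mulLeft K g) := by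
  have degree_mul_lt (Q : K[X]) : (g * Q).degree < n ↔ Q.degree < (n - g.natDegree : ℕ) := by
    obtain rfl | hQ := eq_or_ne Q 0
    · simp
    · rw [← natDegree_lt_iff_degree_lt hQ, ← natDegree_lt_iff_degree_lt (mul_ne_zero hg hQ),
        natDegree_mul hg hQ, Nat.lt_sub_iff_add_lt']
  ext P
  simp only [Submodule.mem_inf, mem_degreeLT, Submodule.restrictScalars_mem,
    Ideal.mem_span_singleton, Submodule.mem_map, LinearMap.mulLeft_apply]
  constructor
  · rintro ⟨hP, Q, rfl⟩
    exact ⟨Q, (degree_mul_lt Q).mp hP, rfl⟩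
  · rintro ⟨Q, hQ, rfl⟩
    exact ⟨(degree_mul_lt Q).mpr hQ, dvd_mul_right g Q⟩

lemma range_ofFn {R : Type*} [Semiring R] [DecidableEq R] (n : ℕ) :
    LinearMap.range (ofFn n) = degreeLT R n := by
  ext P
  rw [LinearMap.mem_range, mem_degreeLT]
  refine ⟨?_, fun hP ↦ ⟨toFn n P, ?_⟩⟩
  · rintro ⟨c, rfl⟩
    exact ofFn_degree_lt c
  · ext i
    obtain hi | hi := lt_or_ge i n
    · rw [ofFn_coeff_eq_val_of_lt _ hi]
      rfl
    · rw [ofFn_coeff_eq_zero_of_ge _ hi,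
        coeff_eq_zero_of_degree_lt (hP.trans_le (Nat.cast_le.mpr hi))]

variable [DecidableEq K]

/-- The code of length `n` with generator polynomial `g`: the words `c` whose polynomial
`∑ i, c i * X ^ i` is a multiple of `g`. No relation such as `g ∣ X ^ n - 1` is imposed, so the
code need not be cyclic. -/
noncomputable def polynomialCode (n : ℕ) (g : K[X]) : Submodule K (Fin n → K) :=
  ((Ideal.span {g}).restrictScalars K).comap (ofFn n)

lemma mem_polynomialCode {n : ℕ} {g : K[X]} {c : Fin n → K} :
    c ∈ polynomialCode n g ↔ g ∣ ofFn n c :=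
  Ideal.mem_span_singleton

lemma finrank_polynomialCode (n : ℕ) {g : K[X]} (hg : g ≠ 0) :
    Module.finrank K (polynomialCode n g) = n - g.natDegree := by
  have hmap : (polynomialCode n g).map (ofFn n) =
      (degreeLT K (n - g.natDegree)).map (LinearMap.mulLeft K g) := by
    rw [polynomialCode, Submodule.map_comap_eq, range_ofFn, degreeLT_inf_span_singleton hg]
  calc Module.finrank K (polynomialCode n g)
      = Module.finrank K ((polynomialCode n g).map (ofFn n)) :=
        (Submodule.equivMapOfInjective _ (injective_ofFn n) _).finrank_eq
    _ = Module.finrank K (degreeLT K (n - g.natDegree)) := by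
        rw [hmap]
        exact (Submodule.equivMapOfInjective _ (mul_right_injective₀ hg) _).finrank_eq.symm
    _ = n - g.natDegree := finrank_degreeLT _

end PolynomialCode

lemma orderOf_le_mul_orderOf_pow {G : Type*} [Monoid G] (x : G) {j : ℕ} (hj : 0 < j) :
    orderOf x ≤ j * orderOf (x ^ j) := by
  obtain hx | hx := (orderOf (x ^ j)).eq_zero_or_pos
  · have : ¬ IsOfFinOrder x := fun h ↦ orderOf_eq_zero_iff.mp hx h.pow
    rw [orderOf_eq_zero this]
    exact Nat.zero_le _
  · exact orderOf_le_of_pow_eq_one (Nat.mul_pos hj hx) (by rw [pow_mul, pow_orderOf_eq_one])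

section FiniteField

open IntermediateField

lemma minpoly_pow_card_dvd (K : Type*) {A : Type*} [Field K] [Finite K] [CommRing A] [Algebra K A]
    (x : A) : minpoly K (x ^ Nat.card K) ∣ minpoly K x := by
  have := Fintype.ofFinite K
  rw [Nat.card_eq_fintype_card, ← FiniteField.frobeniusAlgHom_apply K A]
  apply minpoly.dvd
  rw [Polynomial.aeval_algHom_apply, minpoly.aeval, map_zero]

variable {K L : Type*} [Field K] [Field L] [Finite L] [Algebra K L]

lemma orderOf_lt_card_pow_natDegree_minpoly (x : L) :
    orderOf x < Nat.card K ^ (minpoly K x).natDegree := by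
  have : Finite K := .of_injective _ (algebraMap K L).injective
  calc orderOf x = orderOf (AdjoinSimple.gen K x) :=
        orderOf_injective K⟮x⟯.val.toMonoidHom K⟮x⟯.val.injective (AdjoinSimple.gen K x)
    _ < Nat.card K⟮x⟯ := orderOf_lt_card _
    _ = Nat.card K ^ (minpoly K x).natDegree := by
      rw [Module.natCard_eq_pow_finrank (K := K), adjoin.finrank (Algebra.IsIntegral.isIntegral x)]

lemma natDegree_minpoly_eq_finrank_of_card_le_orderOf_sq {x : L} (hx : Nat.card L ≤ orderOf x ^ 2) :
    (minpoly K x).natDegree = Module.finrank K L := by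
  have : Finite K := .of_injective _ (algebraMap K L).injective
  obtain ⟨m, hm⟩ := minpoly.degree_dvd (Algebra.IsIntegral.isIntegral (R := K) x)
  have hm0 : m ≠ 0 := by
    rintro rfl
    exact Module.finrank_pos.ne' hm
  have hm2 : m < 2 := by
    by_contra! hm2
    apply hx.not_gt
    calc orderOf x ^ 2 < (Nat.card K ^ (minpoly K x).natDegree) ^ 2 :=
          Nat.pow_lt_pow_left (orderOf_lt_card_pow_natDegree_minpoly x) two_ne_zero
      _ ≤ (Nat.card K ^ (minpoly K x).natDegree) ^ m :=
          Nat.pow_le_pow_right (Nat.pow_pos Nat.card_pos) hm2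
      _ = Nat.card L := by rw [Module.natCard_eq_pow_finrank (K := K) (V := L), hm, pow_mul]
  rw [hm, show m = 1 by lia, mul_one]

lemma natDegree_minpoly_pow_eq_finrank {x : L} {j : ℕ} (hj : 0 < j)
    (hx : j ^ 2 * Nat.card L ≤ orderOf x ^ 2) :
    (minpoly K (x ^ j)).natDegree = Module.finrank K L := by
  apply natDegree_minpoly_eq_finrank_of_card_le_orderOf_sq
  refine Nat.le_of_mul_le_mul_left ?_ (pow_pos hj 2)
  calc j ^ 2 * Nat.card L ≤ orderOf x ^ 2 := hx
    _ ≤ (j * orderOf (x ^ j)) ^ 2 := Nat.pow_le_pow_left (orderOf_le_mul_orderOf_pow x hj) 2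
    _ = j ^ 2 * orderOf (x ^ j) ^ 2 := mul_pow _ _ _

lemma exists_pow_card_pow_eq_of_minpoly_eq {x y : L} (h : minpoly K x = minpoly K y) :
    ∃ k, x ^ Nat.card K ^ k = y := by
  have : Finite K := .of_injective _ (algebraMap K L).injective
  have := Fintype.ofFinite K
  obtain ⟨σ, rfl⟩ := isConjRoot_iff_exists_algEquiv.mp h.symm
  obtain ⟨k, rfl⟩ := (FiniteField.bijective_frobeniusAlgEquivOfAlgebraic_pow K L).surjective σ
  refine ⟨k, ?_⟩
  rw [AlgEquiv.coe_pow, FiniteField.coe_frobeniusAlgEquivOfAlgebraic_iterate,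
    Nat.card_eq_fintype_card]

lemma exists_card_pow_modEq_of_minpoly_eq {x : L} (hx : x ≠ 0) {m : ℕ}
    (h : minpoly K x = minpoly K (x ^ m)) : ∃ k, Nat.card K ^ k ≡ m [MOD orderOf x] := by
  obtain ⟨k, hk⟩ := exists_pow_card_pow_eq_of_minpoly_eq h
  exact ⟨k, hx.isUnit.isOfFinOrder.pow_eq_pow_iff_modEq.mp hk⟩

end FiniteField

lemma eq_zero_of_forall_sum_mul_pow_eq_zero {ι R : Type*} [CommRing R] [IsDomain R]
    {S : Finset ι} {f v : ι → R} (hf : Set.InjOn f S)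
    (hfv : ∀ k < #S, ∑ i ∈ S, v i * f i ^ k = 0) : ∀ i ∈ S, v i = 0 := by
  let e : Fin #S ≃ S := S.equivFin.symm
  have hv : (fun k : Fin #S ↦ v (e k)) = 0 := by
    refine Matrix.eq_zero_of_forall_pow_sum_mul_pow_eq_zero (f := fun k : Fin #S ↦ f (e k))
      (hf.injective.comp e.injective) fun k ↦ ?_
    calc ∑ l, v (e l) * f (e l) ^ (k : ℕ)
        = ∑ i : S, v i * f i ^ (k : ℕ) := e.sum_comp fun i : S ↦ v i * f i ^ (k : ℕ)
      _ = ∑ i ∈ S, v i * f i ^ (k : ℕ) := sum_coe_sort S fun i ↦ v i * f i ^ (k : ℕ)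
      _ = 0 := hfv k k.2
  intro i hi
  simpa using congrFun hv (e.symm ⟨i, hi⟩)

lemma prod_minpoly_dvd_iff {ι K A : Type*} [Field K] [CommRing A] [IsDomain A] [Algebra K A]
    {S : Finset ι} {x : ι → A} (hx : ∀ i ∈ S, IsIntegral K (x i))
    (hinj : Set.InjOn (fun i ↦ minpoly K (x i)) S) {P : Polynomial K} :
    ∏ i ∈ S, minpoly K (x i) ∣ P ↔ ∀ i ∈ S, minpoly K (x i) ∣ P := by
  refine ⟨fun h i hi ↦ (dvd_prod_of_mem _ hi).trans h, prod_dvd_of_coprime ?_⟩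
  intro i hi j hj hij
  have hirr {k : ι} (hk : k ∈ S) := minpoly.irreducible (hx k hk)
  refine (hirr hi).coprime_iff_not_dvd.mpr fun hdvd ↦ hij (hinj hi hj ?_)
  exact Polynomial.eq_of_monic_of_associated (minpoly.monic (hx i hi)) (minpoly.monic (hx j hj))
    ((hirr hi).associated_of_dvd (hirr hj) hdvd)

section BCHCode

open Polynomial

variable {F : Type} [Field F] [Algebra (ZMod 2) F] {n : ℕ} {β : F} {J : Finset ℕ}

lemma mem_BCHCode_iff_minpoly_dvd {c : Fin n → ZMod 2} :
    c ∈ BCHCode n β J ↔ ∀ j ∈ J, minpoly (ZMod 2) (β ^ j) ∣ ofFn n c := by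
  have aeval_ofFn (x : F) : aeval x (ofFn n c) = ∑ i, c i • x ^ (i : ℕ) := by
    simp only [ofFn_eq_sum_monomial, map_sum, aeval_monomial, Algebra.smul_def]
  simp only [minpoly.dvd_iff, aeval_ofFn, ← pow_mul]
  rfl

lemma BCHCode_insert_two_mul {j : ℕ} (hj : j ∈ J) :
    BCHCode n β (insert (2 * j) J) = BCHCode n β J := by
  have hdvd : minpoly (ZMod 2) (β ^ (2 * j)) ∣ minpoly (ZMod 2) (β ^ j) := by
    simpa only [Nat.card_zmod, ← pow_mul'] using minpoly_pow_card_dvd (ZMod 2) (β ^ j)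
  ext c
  simp only [mem_BCHCode_iff_minpoly_dvd, forall_mem_insert, and_iff_right_iff_imp]
  exact fun hc ↦ hdvd.trans (hc j hj)

lemma finrank_BCHCode (hβ : IsIntegral (ZMod 2) β)
    (hJ : Set.InjOn (fun j ↦ minpoly (ZMod 2) (β ^ j)) J) :
    Module.finrank (ZMod 2) (BCHCode n β J) =
      n - ∑ j ∈ J, (minpoly (ZMod 2) (β ^ j)).natDegree := by
  have hmonic (j : ℕ) : (minpoly (ZMod 2) (β ^ j)).Monic := minpoly.monic (hβ.pow j)
  have hcode : BCHCode n β J = polynomialCode n (∏ j ∈ J, minpoly (ZMod 2) (β ^ j)) := by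
    ext c
    rw [mem_BCHCode_iff_minpoly_dvd, mem_polynomialCode,
      prod_minpoly_dvd_iff (fun j _ ↦ hβ.pow j) hJ]
  rw [hcode, finrank_polynomialCode n (monic_prod_of_monic _ _ fun j _ ↦ hmonic j).ne_zero,
    natDegree_prod_of_monic _ _ fun j _ ↦ hmonic j]

lemma le_hammingNorm_of_mem_BCHCode_Ico {δ : ℕ} (hβ : n ≤ orderOf β) {c : Fin n → ZMod 2}
    (hc : c ∈ BCHCode n β (Ico 1 δ)) (hc0 : c ≠ 0) : δ ≤ hammingNorm c := by
  by_contra! hlt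
  let S : Finset (Fin n) := {i | c i ≠ 0}
  have hinj : Set.InjOn (fun i : Fin n ↦ β ^ (i : ℕ)) S := fun i _ j _ hij ↦
    Fin.ext (pow_injOn_Iio_orderOf (i.2.trans_le hβ) (j.2.trans_le hβ) hij)
  have hsum (k : ℕ) (hk : k < #S) :
      ∑ i ∈ S, (c i • β ^ (i : ℕ)) * (β ^ (i : ℕ)) ^ k = 0 := by
    have hparity : ∑ i, c i • β ^ ((k + 1) * (i : ℕ)) = 0 :=
      hc (k + 1) (mem_Ico.mpr ⟨k.succ_pos, lt_of_le_of_lt hk hlt⟩)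
    rw [← hparity]
    apply sum_subset_zero_on_sdiff (subset_univ S)
    · simp +contextual [S]
    · intro i _
      rw [smul_mul_assoc, ← pow_succ', ← pow_mul']
  obtain ⟨i, hi⟩ := Function.ne_iff.mp hc0
  have hv := eq_zero_of_forall_sum_mul_pow_eq_zero hinj hsum i (mem_filter.mpr ⟨mem_univ i, hi⟩)
  have hβ0 : β ≠ 0 := (orderOf_pos_iff.mp (i.pos.trans_le hβ)).isUnit.ne_zero
  exact smul_ne_zero hi (pow_ne_zero _ hβ0) hv

lemma five_le_hammingNorm_of_mem_BCHCode_one_three (hβ : n ≤ orderOf β) {c : Fin n → ZMod 2}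
    (hc : c ∈ BCHCode n β {1, 3}) (hc0 : c ≠ 0) : 5 ≤ hammingNorm c := by
  apply le_hammingNorm_of_mem_BCHCode_Ico hβ _ hc0
  rwa [show Ico 1 5 = insert (2 * 2) (insert (2 * 1) {1, 3}) by decide,
    BCHCode_insert_two_mul (by decide), BCHCode_insert_two_mul (by decide)]

end BCHCode

section Arithmetic

lemma not_two_pow_modEq_three {s : ℕ} (hs : 3 ≤ s) (k : ℕ) : ¬ 2 ^ k ≡ 3 [MOD 2 ^ s - 1] := by
  intro h
  have hle : 2 ^ 3 ≤ 2 ^ s := Nat.pow_le_pow_right two_pos hs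
  have hmod : 2 ^ (k % s) ≡ 3 [MOD 2 ^ s - 1] := by
    have hone : 2 ^ s ≡ 1 [MOD 2 ^ s - 1] := Nat.modEq_sub Nat.one_le_two_pow
    calc 2 ^ (k % s) = 1 ^ (k / s) * 2 ^ (k % s) := by rw [one_pow, one_mul]
      _ ≡ (2 ^ s) ^ (k / s) * 2 ^ (k % s) [MOD 2 ^ s - 1] := (hone.symm.pow _).mul_right _
      _ = 2 ^ k := by rw [← pow_mul, ← pow_add, Nat.div_add_mod]
      _ ≡ 3 [MOD 2 ^ s - 1] := h
  have hlt : 2 ^ (k % s) * 2 ≤ 2 ^ s := by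
    rw [← pow_succ]
    exact Nat.pow_le_pow_right two_pos (Nat.mod_lt k (by lia))
  have heq : 2 ^ (k % s) = 3 := hmod.eq_of_lt_of_lt (by lia) (by lia)
  obtain hk | hk := Nat.eq_zero_or_pos (k % s)
  · simp [hk] at heq
  · have := dvd_pow_self 2 hk.ne'
    lia

lemma pow_eight_lt_choose_three {q : ℕ} (hq : 16 ≤ q) :
    q ^ 8 < ((q ^ 2 + 1) * (q - 1)).choose 3 := by
  obtain ⟨p, rfl⟩ := Nat.exists_eq_add_of_le' (show 1 ≤ q by lia)
  rw [Nat.add_sub_cancel]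
  have hcube : 6 * (p + 1) ^ 2 < p ^ 3 := by nlinarith [sq_nonneg p]
  have hbase : p * (p + 1) ^ 2 ≤ ((p + 1) ^ 2 + 1) * p + 1 - 3 := by
    have : ((p + 1) ^ 2 + 1) * p = p * (p + 1) ^ 2 + p := by ring
    lia
  refine lt_of_mul_lt_mul_left (a := Nat.factorial 3) ?_ (Nat.zero_le _)
  rw [← Nat.descFactorial_eq_factorial_mul_choose]
  refine lt_of_lt_of_le ?_ (Nat.pow_sub_le_descFactorial _ _)
  calc Nat.factorial 3 * (p + 1) ^ 8 = 6 * (p + 1) ^ 2 * (p + 1) ^ 6 := by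
        rw [show Nat.factorial 3 = 6 from rfl]
        ring
    _ < p ^ 3 * (p + 1) ^ 6 := by gcongr
    _ = (p * (p + 1) ^ 2) ^ 3 := by ring
    _ ≤ (((p + 1) ^ 2 + 1) * p + 1 - 3) ^ 3 := Nat.pow_le_pow_left hbase 3

lemma two_pow_four_mul_sub_one (s : ℕ) :
    2 ^ (4 * s) - 1 = (2 ^ s + 1) * ((2 ^ (2 * s) + 1) * (2 ^ s - 1)) := by
  have hsq (k : ℕ) : 2 ^ (2 * k) - 1 = (2 ^ k + 1) * (2 ^ k - 1) := by
    rw [← Nat.sq_sub_sq, one_pow, ← pow_mul']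
  calc 2 ^ (4 * s) - 1 = 2 ^ (2 * (2 * s)) - 1 := by rw [show 4 * s = 2 * (2 * s) by lia]
    _ = (2 ^ s + 1) * ((2 ^ (2 * s) + 1) * (2 ^ s - 1)) := by
      rw [hsq (2 * s), hsq s, mul_left_comm]

lemma three_mul_two_pow_le {s : ℕ} (hs : 2 ≤ s) :
    3 * 2 ^ (2 * s) ≤ (2 ^ (2 * s) + 1) * (2 ^ s - 1) := by
  have : 2 ^ 2 ≤ 2 ^ s := Nat.pow_le_pow_right two_pos hs
  calc 3 * 2 ^ (2 * s) = 2 ^ (2 * s) * 3 := mul_comm _ _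
    _ ≤ (2 ^ (2 * s) + 1) * (2 ^ s - 1) := Nat.mul_le_mul (Nat.le_succ _) (by lia)

end Arithmetic

lemma orderOf_pow_two_pow_add_one {G : Type*} [Monoid G] {x : G} {s : ℕ}
    (hx : orderOf x = 2 ^ (4 * s) - 1) :
    orderOf (x ^ (2 ^ s + 1)) = (2 ^ (2 * s) + 1) * (2 ^ s - 1) := by
  rw [two_pow_four_mul_sub_one] at hx
  rw [orderOf_pow_of_dvd (Nat.succ_ne_zero _) (hx ▸ dvd_mul_right _ _), hx,
    Nat.mul_div_cancel_left _ (Nat.succ_pos _)]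

section BinaryField

variable {F : Type} [Field F] [Finite F] [Algebra (ZMod 2) F] {n s : ℕ} {β : F}

lemma minpoly_ne_minpoly_pow_three (hs : 3 ≤ s) (hβ0 : β ≠ 0) (hβ : 2 ^ s - 1 ∣ orderOf β) :
    minpoly (ZMod 2) β ≠ minpoly (ZMod 2) (β ^ 3) := by
  intro h
  obtain ⟨k, hk⟩ := exists_card_pow_modEq_of_minpoly_eq hβ0 h
  rw [Nat.card_zmod] at hk
  exact not_two_pow_modEq_three hs k (hk.of_dvd hβ)

lemma finrank_BCHCode_one_three (hs : 3 ≤ s) (hF : Nat.card F = 2 ^ (4 * s))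
    (hβ : orderOf β = (2 ^ (2 * s) + 1) * (2 ^ s - 1)) :
    Module.finrank (ZMod 2) (BCHCode n β {1, 3}) = n - 8 * s := by
  have hfinrank : Module.finrank (ZMod 2) F = 4 * s := by
    rw [Module.natCard_eq_pow_finrank (K := ZMod 2), Nat.card_zmod] at hF
    exact Nat.pow_right_injective le_rfl hF
  have hdegree {j : ℕ} (hj0 : 0 < j) (hj : j ≤ 3) :
      (minpoly (ZMod 2) (β ^ j)).natDegree = 4 * s := by
    rw [← hfinrank]
    apply natDegree_minpoly_pow_eq_finrank hj0
    calc j ^ 2 * Nat.card F ≤ 3 ^ 2 * Nat.card F := by gcongr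
      _ = (3 * 2 ^ (2 * s)) ^ 2 := by rw [hF, mul_pow, ← pow_mul]; ring_nf
      _ ≤ orderOf β ^ 2 := by
        rw [hβ]
        exact Nat.pow_le_pow_left (three_mul_two_pow_le (by lia)) 2
  have hβ0 : β ≠ 0 := by
    refine (orderOf_pos_iff.mp ?_).isUnit.ne_zero
    have := three_mul_two_pow_le (show 2 ≤ s by lia)
    have := Nat.two_pow_pos (2 * s)
    lia
  have hinj : Set.InjOn (fun j ↦ minpoly (ZMod 2) (β ^ j)) ({1, 3} : Finset ℕ) := by
    rw [coe_pair, Set.injOn_pair, pow_one]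
    exact fun h ↦ (minpoly_ne_minpoly_pow_three hs hβ0 (hβ ▸ dvd_mul_left _ _) h).elim
  rw [finrank_BCHCode (Algebra.IsIntegral.isIntegral β) hinj, sum_pair (by decide),
    hdegree one_pos (by decide), hdegree three_pos le_rfl]
  lia

end BinaryField

theorem stmt_7 (s : ℕ) (hs : 4 ≤ s) (n : ℕ) (hn : n = (2 ^ (2 * s) + 1) * (2 ^ s - 1))
    (α : GaloisField 2 (4 * s)) (hα : orderOf α = 2 ^ (4 * s) - 1)
    (β : GaloisField 2 (4 * s)) (hβ : β = α ^ (2 ^ s + 1)) :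
    Module.finrank (ZMod 2) (BCHCode n β {1, 3}) = n - 8 * s ∧
    5 ≤ minDist (BCHCode n β {1, 3}) ∧
    minDist (BCHCode n β {1, 3}) ≤ 6 := by
  have hq : 2 ^ 4 ≤ 2 ^ s := Nat.pow_le_pow_right two_pos hs
  have horder : orderOf β = n := by rw [hβ, orderOf_pow_two_pow_add_one hα, hn]
  have hchoose : 2 ^ (8 * s) < n.choose 3 := by
    simpa only [hn, ← pow_mul'] using pow_eight_lt_choose_three hq
  have hdim : Module.finrank (ZMod 2) (BCHCode n β {1, 3}) = n - 8 * s :=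
    finrank_BCHCode_one_three (by lia) (GaloisField.card 2 _ (by lia)) (horder.trans hn)
  obtain ⟨c, hc, hc0, hc6⟩ :
      ∃ c ∈ BCHCode n β {1, 3}, c ≠ 0 ∧ hammingNorm c ≤ 2 * 3 := by
    apply exists_mem_hammingNorm_le_of_card_pow_lt
    rw [hdim, Nat.card_zmod, Fintype.card_fin]
    exact (Nat.pow_le_pow_right two_pos (by lia)).trans_lt hchoose
  have hC : BCHCode n β {1, 3} ≠ ⊥ := (Submodule.ne_bot_iff _).mpr ⟨c, hc, hc0⟩
  exact ⟨hdim, le_minDist hC fun _ ↦ five_le_hammingNorm_of_mem_BCHCode_one_three horder.ge,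
    (minDist_le_hammingNorm hc hc0).trans hc6⟩
end

section
/- Let s ≥ 3 be an integer and n = 2^{2s}+2^s+1. Then: (i) the multiplicative order of 2 modulo n equals 3s; (ii) for each i ∈ {1, 3}, the 2-cyclotomic coset C_i modulo n has cardinality 3s; and (iii) for each i ∈ {1, 3}, i is the coset leader of C_i. -/
open Finset

/-
Suppose `2 ^ N ≡ 1 [MOD n]`. Doubling modulo `n` involves no reduction while the result stays
below `n`, so if `i * 2 ^ (N / 2) < n` then `i` has no period in `(0, N / 2]`; since its minimal
period divides `N`, it is `N`. Likewise, if `x ≡ i * 2 ^ j [MOD n]` with `x < i` and `j < N`, then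
`j` exceeds `N / 2`, and going on around the cycle gives `i = x * 2 ^ (N - j)` without reduction, so
that `i` is even. For `n = 2 ^ (2 * s) + 2 ^ s + 1` take `N = 3 * s`, as `q ^ 2 + q + 1` divides
`q ^ 3 - 1`.
-/

open Function

section Orbit

variable {α : Type*} {f : α → α} {x : α}

theorem range_iterate_eq_image_Iio_minimalPeriod (hx : x ∈ periodicPts f) :
    Set.range (f^[·] x) = (f^[·] x) '' Set.Iio (minimalPeriod f x) := by
  refine (Set.image_subset_range _ _).antisymm' ?_
  rintro _ ⟨j, rfl⟩
  exact ⟨j % minimalPeriod f x, Nat.mod_lt _ (minimalPeriod_pos_of_mem_periodicPts hx),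
    iterate_mod_minimalPeriod_eq⟩

theorem ncard_range_iterate (hx : x ∈ periodicPts f) :
    (Set.range (f^[·] x)).ncard = minimalPeriod f x := by
  rw [range_iterate_eq_image_Iio_minimalPeriod hx,
    iterate_injOn_Iio_minimalPeriod.ncard_image, Set.ncard_Iio_nat]

end Orbit

section Multiplication

variable {n b i j N : ℕ}

theorem iterate_natCast_mul_natCast (n b i j : ℕ) :
    ((b : ZMod n) * ·)^[j] (i : ZMod n) = ((i * b ^ j : ℕ) : ZMod n) := by
  rw [mul_left_iterate, mul_comm i]
  push_cast
  rfl

theorem isPeriodicPt_mul_left_of_pow_eq_one {M : Type*} [Monoid M] {a : M} {N : ℕ}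
    (ha : a ^ N = 1) (x : M) : IsPeriodicPt (a * ·) N x := by
  simp only [IsPeriodicPt, IsFixedPt, mul_left_iterate, ha, one_mul]

theorem not_isPeriodicPt_natCast_mul (hb : 1 < b) (hi : 0 < i) (hj : 0 < j) (hlt : i * b ^ j < n) :
    ¬ IsPeriodicPt ((b : ZMod n) * ·) j (i : ZMod n) := by
  intro hper
  rw [IsPeriodicPt, IsFixedPt, iterate_natCast_mul_natCast, ZMod.natCast_eq_natCast_iff] at hper
  have hgrow : i < i * b ^ j := lt_mul_of_one_lt_right hi (Nat.one_lt_pow hj.ne' hb)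
  exact hgrow.ne' (hper.eq_of_lt_of_lt hlt (hgrow.trans hlt))

theorem minimalPeriod_natCast_mul_eq (hb : 1 < b) (hN : 0 < N) (hbN : (b : ZMod n) ^ N = 1)
    (hi : 0 < i) (hlt : i * b ^ (N / 2) < n) :
    minimalPeriod ((b : ZMod n) * ·) (i : ZMod n) = N := by
  have hper := isPeriodicPt_mul_left_of_pow_eq_one hbN (i : ZMod n)
  set d := minimalPeriod ((b : ZMod n) * ·) (i : ZMod n)
  have hd : 0 < d := hper.minimalPeriod_pos hN
  by_contra hne
  have hd_le : d ≤ N / 2 := by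
    obtain ⟨k, hk⟩ : d ∣ N := hper.minimalPeriod_dvd
    have hk_two : 2 ≤ k := by
      by_contra! hk_lt
      interval_cases k <;> omega
    rw [Nat.le_div_iff_mul_le two_pos, hk]
    exact Nat.mul_le_mul_left d hk_two
  have hlt_d : i * b ^ d < n :=
    (Nat.mul_le_mul_left i (Nat.pow_le_pow_right hb.le hd_le)).trans_lt hlt
  exact not_isPeriodicPt_natCast_mul hb hi hd hlt_d (isPeriodicPt_minimalPeriod _ _)

theorem orderOf_natCast_eq (hb : 1 < b) (hN : 0 < N) (hbN : (b : ZMod n) ^ N = 1)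
    (hlt : b ^ (N / 2) < n) : orderOf (b : ZMod n) = N := by
  simpa only [Nat.cast_one] using!
    minimalPeriod_natCast_mul_eq hb hN hbN one_pos (by rwa [one_mul])

theorem le_mul_pow_mod_of_lt (hb : 0 < b) (hbN : b ^ N ≡ 1 [MOD n]) (hi : ¬ b ∣ i)
    (hlt : i * b ^ (N / 2) < n) (hj : j < N) : i ≤ i * b ^ j % n := by
  have mul_pow_lt {k : ℕ} (hk : k ≤ N / 2) : i * b ^ k < n :=
    (Nat.mul_le_mul_left i (Nat.pow_le_pow_right hb hk)).trans_lt hlt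
  obtain hj_half | hj_half := le_or_gt j (N / 2)
  · rw [Nat.mod_eq_of_lt (mul_pow_lt hj_half)]
    exact Nat.le_mul_of_pos_right i (pow_pos hb j)
  by_contra! hx
  set x := i * b ^ j % n
  have hcycle : x * b ^ (N - j) ≡ i [MOD n] := calc
    x * b ^ (N - j) ≡ i * b ^ j * b ^ (N - j) [MOD n] := (Nat.mod_modEq _ n).mul_right _
    _ = i * b ^ N := by rw [mul_assoc, ← pow_add, Nat.add_sub_cancel' hj.le]
    _ ≡ i * 1 [MOD n] := hbN.mul_left i
    _ = i := mul_one i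
  have hx_lt : x * b ^ (N - j) < n :=
    (Nat.mul_le_mul_right _ hx.le).trans_lt (mul_pow_lt (by omega))
  have hi_lt : i < n := by simpa only [pow_zero, mul_one] using mul_pow_lt (Nat.zero_le _)
  have hi_eq : x * b ^ (N - j) = i := hcycle.eq_of_lt_of_lt hx_lt hi_lt
  exact hi (hi_eq ▸ (dvd_pow_self b (by omega)).mul_left x)

theorem le_mul_pow_mod (hb : 0 < b) (hN : 0 < N) (hbN : (b : ZMod n) ^ N = 1) (hi : ¬ b ∣ i)
    (hlt : i * b ^ (N / 2) < n) (j : ℕ) : i ≤ i * b ^ j % n := by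
  have hred : i * b ^ (j % N) ≡ i * b ^ j [MOD n] := by
    rw [← ZMod.natCast_eq_natCast_iff]
    push_cast
    rw [← pow_eq_pow_mod j hbN]
  have hone : b ^ N ≡ 1 [MOD n] := by
    rw [← ZMod.natCast_eq_natCast_iff]
    exact_mod_cast hbN
  rw [← hred]
  exact le_mul_pow_mod_of_lt hb hone hi hlt (Nat.mod_lt j hN)

end Multiplication

section CyclotomicCoset

variable {n i N : ℕ}

theorem cycCoset_eq_val_image_range (n i : ℕ) :
    cycCoset n i = ZMod.val '' Set.range fun j ↦ (((2 : ℕ) : ZMod n) * ·)^[j] (i : ZMod n) := by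
  ext x
  simp only [cycCoset, Set.mem_ofPred_eq, iterate_natCast_mul_natCast, ← Set.range_comp,
    Set.mem_range, comp_apply, ZMod.val_natCast, eq_comm]

theorem ncard_cycCoset (hN : 0 < N) (htwo : ((2 : ℕ) : ZMod n) ^ N = 1) (hi : 0 < i)
    (hlt : i * 2 ^ (N / 2) < n) : (cycCoset n i).ncard = N := by
  have : NeZero n := ⟨(Nat.zero_le _).trans_lt hlt |>.ne'⟩
  have hper : (i : ZMod n) ∈ periodicPts (((2 : ℕ) : ZMod n) * ·) :=
    mk_mem_periodicPts hN (isPeriodicPt_mul_left_of_pow_eq_one htwo _)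
  rw [cycCoset_eq_val_image_range, Set.ncard_image_of_injective _ (ZMod.val_injective n),
    ncard_range_iterate hper, minimalPeriod_natCast_mul_eq one_lt_two hN htwo hi hlt]

theorem mem_cycCoset_self (hi : i < n) : i ∈ cycCoset n i :=
  ⟨0, by rw [pow_zero, mul_one, Nat.mod_eq_of_lt hi]⟩

theorem cosetLeader_eq_self (hN : 0 < N) (htwo : ((2 : ℕ) : ZMod n) ^ N = 1) (hi : Odd i)
    (hlt : i * 2 ^ (N / 2) < n) : cosetLeader n i = i := by
  have hi_mem : i ∈ cycCoset n i :=
    mem_cycCoset_self ((Nat.le_mul_of_pos_right i (by positivity)).trans_lt hlt)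
  refine IsLeast.csInf_eq ⟨hi_mem, ?_⟩
  rintro _ ⟨j, rfl⟩
  exact le_mul_pow_mod two_pos hN htwo hi.not_two_dvd_nat hlt j

end CyclotomicCoset

section Modulus

variable {b s n i : ℕ}

theorem natCast_pow_three_mul_eq_one (hn : n = b ^ (2 * s) + b ^ s + 1) :
    (b : ZMod n) ^ (3 * s) = 1 := by
  have hzero : ((b : ZMod n) ^ s) ^ 2 + (b : ZMod n) ^ s + 1 = 0 := by
    rw [← pow_mul, mul_comm s, ← ZMod.natCast_self n, hn]
    push_cast
    rfl
  rw [mul_comm, pow_mul]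
  linear_combination ((b : ZMod n) ^ s - 1) * hzero

theorem mul_pow_half_three_mul_lt (hb : 0 < b) (hi : i < b ^ ((s + 1) / 2)) :
    i * b ^ (3 * s / 2) < b ^ (2 * s) + b ^ s + 1 := calc
  i * b ^ (3 * s / 2) < b ^ ((s + 1) / 2) * b ^ (3 * s / 2) :=
    Nat.mul_lt_mul_of_pos_right hi (pow_pos hb _)
  _ = b ^ (2 * s) := by rw [← pow_add]; congr 1; omega
  _ < b ^ (2 * s) + b ^ s + 1 := by omega

end Modulus

theorem stmt_10_general (s : ℕ) (hs : 0 < s) (n : ℕ)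
    (hn : n = 2 ^ (2 * s) + 2 ^ s + 1) :
    orderOf (2 : ZMod n) = 3 * s ∧
    ∀ i, 0 < i → i < 2 ^ ((s + 1) / 2) →
      (cycCoset n i).ncard = 3 * s ∧ (Odd i → cosetLeader n i = i) := by
  have hN : 0 < 3 * s := by omega
  have htwo : ((2 : ℕ) : ZMod n) ^ (3 * s) = 1 := natCast_pow_three_mul_eq_one hn
  have hlt {i : ℕ} (hi : i < 2 ^ ((s + 1) / 2)) : i * 2 ^ (3 * s / 2) < n :=
    hn ▸ mul_pow_half_three_mul_lt two_pos hi
  have hone : 2 ^ (3 * s / 2) < n := by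
    simpa only [one_mul] using hlt (Nat.one_lt_two_pow (by omega : (s + 1) / 2 ≠ 0))
  exact ⟨orderOf_natCast_eq one_lt_two hN htwo hone, fun i hi_pos hi ↦
    ⟨ncard_cycCoset hN htwo hi_pos (hlt hi), fun hi_odd ↦
      cosetLeader_eq_self hN htwo hi_odd (hlt hi)⟩⟩

theorem stmt_10 (s : ℕ) (hs : 3 ≤ s) (n : ℕ)
    (hn : n = 2 ^ (2 * s) + 2 ^ s + 1) :
    orderOf (2 : ZMod n) = 3 * s ∧
    ∀ i ∈ ({1, 3} : Finset ℕ),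
      (cycCoset n i).ncard = 3 * s ∧ cosetLeader n i = i := by
  obtain ⟨horder, hcoset⟩ := stmt_10_general s (by omega) n hn
  have hfour : 2 ^ 2 ≤ 2 ^ ((s + 1) / 2) := Nat.pow_le_pow_right two_pos (by omega)
  refine ⟨horder, fun i hi ↦ ?_⟩
  obtain rfl | rfl : i = 1 ∨ i = 3 := by simpa using hi
  · exact (hcoset 1 (by omega) (by omega)).imp_right (· odd_one)
  · exact (hcoset 3 (by omega) (by omega)).imp_right (· (by decide))
end

section
/- Let s ≥ 4 be an integer and n = (4^s−1)/3. Then: (i) the multiplicative order of 2 modulo n equals 2s; (ii) for every odd integer i with 1 ≤ i ≤ 2^s/3, the 2-cyclotomic coset C_i modulo n has cardinality 2s; and (iii) every such odd i is the coset leader of its 2-cyclotomic coset C_i. -/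
open Finset

/-!
Multiplication by `q ^ j` modulo `q ^ m - 1` rotates the `m` base-`q` digits of a number by `j`
places. If `a` has at most `⌈m / 2⌉` digits and its last digit is nonzero, every nontrivial rotation
makes `a` larger: either no digit wraps around and `a` is multiplied by `q ^ j`, or the nonzero last
digit lands beyond all the digits of `a`. For `d * n = q ^ m - 1`, the residue of `i * q ^ j`
modulo `n` is `1 / d` times the rotation of `d * i`, so the same holds for `i` modulo `n`. Hence `i`
is the strict minimum of its coset; since the shifts of `i` by `0 < j < m` never return to `i`, the
coset has `m` elements and `2` has order `m`. The theorem is the case `q = 2`, `d = 3`, `m = 2 * s`.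
-/

section DigitRotation

variable {q m t j k a d n i : ℕ}

theorem mul_pow_mod_pow_sub_one (ha : a < q ^ (j + k) - 1) :
    a * q ^ j % (q ^ (j + k) - 1) = a % q ^ k * q ^ j + a / q ^ k := by
  obtain ⟨N, hN⟩ : ∃ N, q ^ (j + k) = N + 1 := ⟨q ^ (j + k) - 1, by omega⟩
  have hqN : q ^ j * q ^ k = N + 1 := by rw [← pow_add, hN]
  rw [hN, Nat.add_sub_cancel] at ha ⊢
  have hdigits : q ^ k * (a / q ^ k) + a % q ^ k = a := Nat.div_add_mod a (q ^ k)
  have hlow : a % q ^ k < q ^ k := Nat.mod_lt _ <|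
    Nat.pos_of_ne_zero (right_ne_zero_of_mul (hqN.trans_ne N.succ_ne_zero))
  have hhigh : a / q ^ k < q ^ j := Nat.div_lt_of_lt_mul (by rw [mul_comm, hqN]; omega)
  generalize a / q ^ k = c at hdigits hhigh ⊢
  generalize a % q ^ k = r at hdigits hlow ⊢
  have hshift : a * q ^ j = r * q ^ j + c + N * c :=
    calc
      a * q ^ j = (q ^ k * c + r) * q ^ j := by rw [hdigits]
      _ = r * q ^ j + q ^ j * q ^ k * c := by ring
      _ = r * q ^ j + c + N * c := by rw [hqN]; ring
  have hlt : r * q ^ j + c + 1 < q ^ k * q ^ j := by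
    rcases Nat.lt_or_eq_of_le (Nat.succ_le_of_lt hlow) with hr | hr
    · calc
        r * q ^ j + c + 1 ≤ (r + 1) * q ^ j := by linarith
        _ < q ^ k * q ^ j := Nat.mul_lt_mul_of_pos_right hr (Nat.zero_lt_of_lt hhigh)
    · have hc : c + 1 < q ^ j := Nat.lt_of_mul_lt_mul_left (a := q ^ k) (by linarith)
      calc
        r * q ^ j + c + 1 < (r + 1) * q ^ j := by linarith
        _ = q ^ k * q ^ j := by rw [← hr]
  rw [hshift, Nat.add_mul_mod_self_left, Nat.mod_eq_of_lt (by linarith)]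

theorem lt_mul_pow_mod_pow_sub_one (ht : 2 * t ≤ m + 1) (ha : a < q ^ t) (hqa : ¬ q ∣ a)
    (hj : 0 < j) (hjm : j < m) : a < a * q ^ j % (q ^ m - 1) := by
  have ha_pos : 0 < a := Nat.pos_of_ne_zero fun h => hqa (h ▸ dvd_zero q)
  have hq : 1 < q := by
    by_contra! hq
    have hqt : q ^ t ≤ 1 := pow_le_one' hq t
    omega
  obtain ⟨k, hk, rfl⟩ : ∃ k, 0 < k ∧ m = j + k := ⟨m - j, by omega, by omega⟩
  have htm : q ^ t < q ^ (j + k) := Nat.pow_lt_pow_right hq (by omega)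
  rw [mul_pow_mod_pow_sub_one (by omega)]
  rcases lt_or_ge a (q ^ k) with hak | hka
  · rw [Nat.mod_eq_of_lt hak, Nat.div_eq_of_lt hak, add_zero]
    exact lt_mul_of_one_lt_right ha_pos (Nat.one_lt_pow hj.ne' hq)
  · have hkt : k < t := (Nat.pow_lt_pow_iff_right hq).mp (hka.trans_lt ha)
    have hlast : 0 < a % q ^ k := Nat.pos_of_ne_zero fun h =>
      hqa ((dvd_pow_self q hk.ne').trans (Nat.dvd_of_mod_eq_zero h))
    calc
      a < q ^ t := ha
      _ ≤ q ^ j := Nat.pow_le_pow_right hq.le (by omega)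
      _ ≤ a % q ^ k * q ^ j := Nat.le_mul_of_pos_left _ hlast
      _ ≤ a % q ^ k * q ^ j + a / q ^ k := Nat.le_add_right _ _

theorem coprime_of_mul_eq_pow_sub_one (hq : 0 < q) (hm : m ≠ 0) (hdn : d * n = q ^ m - 1) :
    Nat.Coprime q d := by
  have hcop : Nat.Coprime (q ^ m) (q ^ m - 1) :=
    (Nat.coprime_self_sub_right (Nat.one_le_pow m q hq)).mpr (Nat.coprime_one_right _)
  exact (hcop.coprime_dvd_right ⟨n, hdn.symm⟩).coprime_dvd_left (dvd_pow_self q hm)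

theorem lt_mul_pow_mod_of_mul_eq_pow_sub_one (hq : 0 < q) (hdn : d * n = q ^ m - 1)
    (ht : 2 * t ≤ m + 1) (hi : d * i < q ^ t) (hqi : ¬ q ∣ i) (hj : 0 < j) (hjm : j < m) :
    i < i * q ^ j % n := by
  have hqdi : ¬ q ∣ d * i := fun h =>
    hqi ((coprime_of_mul_eq_pow_sub_one hq (by omega) hdn).dvd_of_dvd_mul_left h)
  have hrot := lt_mul_pow_mod_pow_sub_one ht hi hqdi hj hjm
  rw [← hdn, mul_assoc, Nat.mul_mod_mul_left] at hrot
  exact Nat.lt_of_mul_lt_mul_left hrot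

end DigitRotation

theorem orderOf_natCast_zmod_eq {q m n i : ℕ} (hm : 0 < m) (hpow : q ^ m ≡ 1 [MOD n])
    (hi : ∀ j, 0 < j → j < m → ¬ i * q ^ j ≡ i [MOD n]) : orderOf (q : ZMod n) = m := by
  have hpow_iff : ∀ j, (q : ZMod n) ^ j = 1 ↔ q ^ j ≡ 1 [MOD n] := fun j => by
    rw [← ZMod.natCast_eq_natCast_iff, Nat.cast_pow, Nat.cast_one]
  refine (orderOf_eq_iff hm).mpr ⟨(hpow_iff m).mpr hpow, fun j hjm hj h => hi j hj hjm ?_⟩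
  simpa only [mul_one] using ((hpow_iff j).mp h).mul_left i

section CycCoset

variable {m n i : ℕ}

theorem cycCoset_eq_image_Iio (hm : 0 < m) (hpow : 2 ^ m ≡ 1 [MOD n]) :
    cycCoset n i = (fun j => i * 2 ^ j % n) '' Set.Iio m := by
  have hperiodic : Function.Periodic (fun j => i * 2 ^ j % n) m := fun j => by
    change i * 2 ^ (j + m) ≡ i * 2 ^ j [MOD n]
    simpa only [pow_add, mul_assoc, mul_one] using (hpow.mul_left (2 ^ j)).mul_left i
  ext x
  constructor
  · rintro ⟨j, rfl⟩
    exact ⟨j % m, Nat.mod_lt j hm, hperiodic.map_mod_nat j⟩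
  · rintro ⟨j, -, rfl⟩
    exact ⟨j, rfl⟩

theorem ncard_cycCoset_s13 (hm : 0 < m) (hpow : 2 ^ m ≡ 1 [MOD n])
    (hi : ∀ j, 0 < j → j < m → ¬ i * 2 ^ j ≡ i [MOD n]) : (cycCoset n i).ncard = m := by
  have hne : ∀ j k, j < k → k < m → i * 2 ^ j % n ≠ i * 2 ^ k % n := by
    intro j k hjk hkm (h : i * 2 ^ j ≡ i * 2 ^ k [MOD n])
    refine hi (j + (m - k)) (by omega) (by omega) ?_
    calc
      i * 2 ^ (j + (m - k)) = i * 2 ^ j * 2 ^ (m - k) := by ring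
      _ ≡ i * 2 ^ k * 2 ^ (m - k) [MOD n] := h.mul_right _
      _ = i * 2 ^ m := by rw [mul_assoc, ← pow_add, Nat.add_sub_cancel' hkm.le]
      _ ≡ i * 1 [MOD n] := hpow.mul_left i
      _ = i := mul_one i
  have hinj : Set.InjOn (fun j => i * 2 ^ j % n) (Set.Iio m) := by
    intro j hj k hk h
    rcases lt_trichotomy j k with hjk | hjk | hkj
    · exact absurd h (hne j k hjk hk)
    · exact hjk
    · exact absurd h.symm (hne k j hkj hj)
  rw [cycCoset_eq_image_Iio hm hpow, hinj.ncard_image, Set.ncard_Iio_nat]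

theorem cosetLeader_eq_self_s13 (hm : 0 < m) (hpow : 2 ^ m ≡ 1 [MOD n]) (hin : i < n)
    (hi : ∀ j, 0 < j → j < m → i ≤ i * 2 ^ j % n) : cosetLeader n i = i := by
  have hi_zero : i * 2 ^ 0 % n = i := by rw [pow_zero, mul_one, Nat.mod_eq_of_lt hin]
  refine IsLeast.csInf_eq ⟨⟨0, hi_zero.symm⟩, ?_⟩
  rw [cycCoset_eq_image_Iio hm hpow]
  rintro _ ⟨j, hjm, rfl⟩
  rcases Nat.eq_zero_or_pos j with rfl | hj
  · exact hi_zero.ge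
  · exact hi j hj hjm

end CycCoset

theorem stmt_13_general (m d n : ℕ) (hm : 2 ≤ m) (hdn : d * n = 2 ^ m - 1)
    (hd : d < 2 ^ ((m + 1) / 2)) :
    orderOf (2 : ZMod n) = m ∧
    ∀ i : ℕ, Odd i → d * i < 2 ^ ((m + 1) / 2) →
      (cycCoset n i).ncard = m ∧ cosetLeader n i = i := by
  have hm_pos : 0 < m := by omega
  have hpow : 2 ^ m ≡ 1 [MOD n] :=
    ((Nat.modEq_iff_dvd' Nat.one_le_two_pow).mpr (hdn ▸ dvd_mul_left n d)).symm
  have hn : 0 < n := Nat.pos_of_ne_zero fun h => by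
    have : 1 < 2 ^ m := Nat.one_lt_two_pow hm_pos.ne'
    simp only [h, mul_zero] at hdn
    omega
  have hshift : ∀ i, Odd i → d * i < 2 ^ ((m + 1) / 2) → ∀ j, 0 < j → j < m →
      i < i * 2 ^ j % n := fun i hodd hi _ =>
    lt_mul_pow_mod_of_mul_eq_pow_sub_one two_pos hdn (by omega) hi hodd.not_two_dvd_nat
  have hfree : ∀ i, Odd i → d * i < 2 ^ ((m + 1) / 2) → ∀ j, 0 < j → j < m →
      ¬ i * 2 ^ j ≡ i [MOD n] := fun i hodd hi j hj hjm h =>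
    ((hshift i hodd hi j hj hjm).trans_le (h.trans_le (Nat.mod_le i n))).false
  refine ⟨orderOf_natCast_zmod_eq (q := 2) hm_pos hpow (hfree 1 odd_one (by rwa [mul_one])),
    fun i hodd hi => ⟨ncard_cycCoset_s13 hm_pos hpow (hfree i hodd hi), ?_⟩⟩
  have hin : i < n := (hshift i hodd hi 1 one_pos hm).trans (Nat.mod_lt _ hn)
  exact cosetLeader_eq_self_s13 hm_pos hpow hin fun j hj hjm => (hshift i hodd hi j hj hjm).le

theorem stmt_13 (s : ℕ) (hs : 4 ≤ s) (n : ℕ) (hn : n = (4 ^ s - 1) / 3) :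
    orderOf (2 : ZMod n) = 2 * s ∧
    ∀ i : ℕ, Odd i → 1 ≤ i → i ≤ 2 ^ s / 3 →
      (cycCoset n i).ncard = 2 * s ∧ cosetLeader n i = i := by
  have hdn : 3 * n = 2 ^ (2 * s) - 1 := by
    rw [hn, Nat.mul_div_cancel' (Nat.sub_one_dvd_pow_sub_one 4 s), pow_mul,
      show 2 ^ 2 = 4 from rfl]
  have hhalf : (2 * s + 1) / 2 = s := by omega
  have hthree : 3 < 2 ^ s := (by norm_num : 3 < 2 ^ 4).trans_le (Nat.pow_le_pow_right two_pos hs)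
  have hndvd : ¬ 3 ∣ 2 ^ s := fun h => absurd (Nat.prime_three.dvd_of_dvd_pow h) (by norm_num)
  obtain ⟨horder, hcoset⟩ := stmt_13_general (2 * s) 3 n (by omega) hdn (by rwa [hhalf])
  exact ⟨horder, fun i hodd _ hi => hcoset i hodd (by rw [hhalf]; omega)⟩
end

section
/- Let s ≥ 4. The code C_{(2,n,3,1)} of length n = (4^s−1)/3 has dimension n − 2s and minimum distance exactly 3. -/
open Finset

/-!
The codewords are the `ZMod 2`-linear relations among `1, β, …, β ^ (n - 1)`, so the dimension is
`n` minus the degree of `β`. That degree is `2 * s`, because a proper subfield of `GF(4 ^ s)` has at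
most `2 ^ s` elements, too few to contain an element of order `n`.

The powers of `β` are distinct, so no nonzero word has weight below `3`. They are exactly the
nonzero cubes, so a word of weight `3` is a solution of `x ^ 3 + y ^ 3 = 1` with `x, y ≠ 0`.
The substitution `x = t / b`, `y = (t + 1) / b` turns this equation into `t ^ 2 - t = b ^ 3 + 1`.
As `1` lies in the image `H` of the Artin–Schreier map `t ↦ t ^ 2 - t`, it suffices to find
`b ∉ GF(4)` with `b ^ 3 ∈ H`. For `1, x, y` linearly independent over `GF(4) = {0, 1, ω, ω ^ 2}`,
the five elements `x, y, x + y, x + ω * y, x + ω ^ 2 * y` lie outside `GF(4)` and their cubes sum to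
zero; since `H` has index two, not all five cubes can lie outside `H`.
-/

section ArtinSchreier

variable (F : Type*) [Field F] (p : ℕ) [Fact p.Prime] [CharP F p]

/-- The Artin–Schreier map `t ↦ t ^ p - t` of a field of characteristic `p`, as an endomorphism of
its additive group. -/
def artinSchreier : F →+ F :=
  (frobenius F p : F →+ F) - AddMonoidHom.id F

lemma artinSchreier_apply (t : F) : artinSchreier F p t = t ^ p - t := rfl

lemma ker_artinSchreier : (artinSchreier F p).ker = (⊥ : Subfield F).toAddSubgroup := by
  ext t
  rw [AddMonoidHom.mem_ker, artinSchreier_apply, sub_eq_zero]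
  exact (Subfield.mem_bot_iff_pow_eq_self F p).symm

lemma index_range_artinSchreier [Finite F] : (artinSchreier F p).range.index = p := by
  have card_ker : Nat.card (artinSchreier F p).ker = p := by
    rw [ker_artinSchreier]
    exact Subfield.card_bot F p
  have card_mul_index := (artinSchreier F p).range.card_mul_index.trans
    (artinSchreier F p).ker.card_mul_index.symm
  rw [AddSubgroup.index_ker, card_ker, mul_comm p] at card_mul_index
  exact Nat.eq_of_mul_eq_mul_left Nat.card_pos card_mul_index

end ArtinSchreier

section FermatCubic

lemma card_filter_pow_eq_self_le {F : Type*} [Field F] [Fintype F] [DecidableEq F] {m : ℕ}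
    (hm : 1 < m) : #{x : F | x ^ m = x} ≤ m := by
  have hne := FiniteField.X_pow_card_sub_X_ne_zero F hm
  calc #{x : F | x ^ m = x}
      ≤ #(Polynomial.X ^ m - Polynomial.X : Polynomial F).roots.toFinset :=
        card_le_card fun x hx ↦ by simpa [hne, sub_eq_zero] using hx
    _ ≤ (Polynomial.X ^ m - Polynomial.X : Polynomial F).roots.card := Multiset.toFinset_card_le _
    _ ≤ m := (Polynomial.card_roots' _).trans_eq
        (FiniteField.X_pow_card_sub_X_natDegree_eq F hm)

/- When the solutions of `x ^ m = x` form a subfield, the conclusion says that `1, x, y` are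
linearly independent over it. -/
lemma exists_pow_ne_self_and_forall_add_mul_ne {F : Type*} [Field F] [Finite F] {m : ℕ}
    (hm : 1 < m) (hF : m ^ 2 < Nat.card F) :
    ∃ x y : F, x ^ m ≠ x ∧ ∀ a b : F, a ^ m = a → b ^ m = b → a + b * x ≠ y := by
  classical
  have := Fintype.ofFinite F
  rw [Nat.card_eq_fintype_card, ← card_univ] at hF
  set S : Finset F := {x | x ^ m = x} with hS
  have card_S : #S ≤ m := card_filter_pow_eq_self_le hm
  obtain ⟨x, -, hx⟩ := exists_mem_notMem_of_card_lt_card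
    (show #S < #(univ : Finset F) by nlinarith)
  have card_span : #((S ×ˢ S).image fun c ↦ c.1 + c.2 * x) ≤ m ^ 2 :=
    calc _ ≤ #(S ×ˢ S) := card_image_le
      _ ≤ m ^ 2 := by rw [card_product, sq]; gcongr
  obtain ⟨y, -, hy⟩ := exists_mem_notMem_of_card_lt_card (card_span.trans_lt hF)
  refine ⟨x, y, by simpa [hS] using hx, fun a b ha hb hab ↦ hy ?_⟩
  exact mem_image.2 ⟨(a, b), by simp [hS, ha, hb], hab⟩

lemma sq_add_self_add_one_eq_zero {R : Type*} [CommRing R] [IsDomain R] {ω : R}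
    (hω : IsPrimitiveRoot ω 3) : ω ^ 2 + ω + 1 = 0 := by
  have h := hω.geom_sum_eq_zero (by norm_num)
  simp only [sum_range_succ, sum_range_zero, pow_zero, pow_one] at h
  linear_combination h

variable {F : Type*} [Field F] [CharP F 2]

lemma one_mem_range_artinSchreier_two {ω : F} (hω : IsPrimitiveRoot ω 3) :
    1 ∈ (artinSchreier F 2).range :=
  ⟨ω, by
    rw [artinSchreier_apply]
    linear_combination sq_add_self_add_one_eq_zero hω - (ω + 1) * CharTwo.two_eq_zero (R := F)⟩

lemma exists_pow_four_ne_self_and_cube_mem_range_artinSchreier [Finite F] (hF : 16 < Nat.card F)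
    {ω : F} (hω : IsPrimitiveRoot ω 3) :
    ∃ b : F, b ^ 4 ≠ b ∧ b ^ 3 ∈ (artinSchreier F 2).range := by
  have two_eq_zero : (2 : F) = 0 := CharTwo.two_eq_zero
  obtain ⟨x, y, hx, hxy⟩ :=
    exists_pow_ne_self_and_forall_add_mul_ne (F := F) (m := 4) (by norm_num) (by simpa using hF)
  have hy : y ^ 4 ≠ y := fun hy ↦ hxy y 0 hy (by simp) (by simp)
  have add_mul_pow_ne {ζ : F} (hζ : ζ ^ 3 = 1) : (x + ζ * y) ^ 4 ≠ x + ζ * y := fun h ↦ by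
    refine hxy (ζ ^ 2 * (x + ζ * y)) (ζ ^ 2) ?_ ?_ ?_
    · rw [mul_pow, h]
      linear_combination (ζ ^ 5 + ζ ^ 2) * (x + ζ * y) * hζ
    · linear_combination (ζ ^ 5 + ζ ^ 2) * hζ
    · linear_combination y * hζ + ζ ^ 2 * x * two_eq_zero
  by_contra! cube_notMem
  have cube_add_cube_mem {a b : F} (ha : a ^ 4 ≠ a) (hb : b ^ 4 ≠ b) :
      a ^ 3 + b ^ 3 ∈ (artinSchreier F 2).range :=
    (AddSubgroup.add_mem_iff_of_index_two (index_range_artinSchreier F 2)).2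
      (iff_of_false (cube_notMem a ha) (cube_notMem b hb))
  have hω₂ : (ω ^ 2) ^ 3 = 1 := by rw [pow_right_comm, hω.pow_eq_one, one_pow]
  have sum_cubes : x ^ 3 =
      y ^ 3 + (x + 1 * y) ^ 3 + ((x + ω * y) ^ 3 + (x + ω ^ 2 * y) ^ 3) := by
    linear_combination
      -(3 * x ^ 2 * y + 3 * x * y ^ 2 * (ω ^ 2 - ω + 1) + y ^ 3 * (ω - 1) * (ω ^ 3 + 2)) *
        sq_add_self_add_one_eq_zero hω - (x ^ 3 + 2 * y ^ 3) * two_eq_zero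
  apply cube_notMem x hx
  rw [sum_cubes]
  exact add_mem (cube_add_cube_mem hy (add_mul_pow_ne (one_pow 3)))
    (cube_add_cube_mem (add_mul_pow_ne hω.pow_eq_one) (add_mul_pow_ne hω₂))

lemma exists_cube_add_cube_eq_one [Finite F] (hF : 16 < Nat.card F) {ω : F}
    (hω : IsPrimitiveRoot ω 3) : ∃ x y : F, x ≠ 0 ∧ y ≠ 0 ∧ x ^ 3 + y ^ 3 = 1 := by
  have two_eq_zero : (2 : F) = 0 := CharTwo.two_eq_zero
  obtain ⟨b, hb, hbH⟩ := exists_pow_four_ne_self_and_cube_mem_range_artinSchreier hF hω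
  obtain ⟨t, ht⟩ := add_mem hbH (one_mem_range_artinSchreier_two hω)
  rw [artinSchreier_apply] at ht
  have hb₀ : b ≠ 0 := by rintro rfl; simp at hb
  have hb₃ : b ^ 3 + 1 ≠ 0 := fun h ↦ hb (by linear_combination b * h - b * two_eq_zero)
  refine ⟨t / b, (t + 1) / b, div_ne_zero ?_ hb₀, div_ne_zero ?_ hb₀, ?_⟩
  · rintro rfl
    exact hb₃ (by simp [← ht])
  · exact fun h ↦ hb₃ (by linear_combination (t - 2) * h + two_eq_zero - ht)
  · field_simp
    linear_combination (t ^ 3 + t ^ 2 + 2 * t + 1) * two_eq_zero + ht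

end FermatCubic

lemma orderOf_lt_natCard {F : Type*} [Field F] [Finite F] (β : F) : orderOf β < Nat.card F := by
  have := Fintype.ofFinite F
  rw [Nat.card_eq_fintype_card]
  have one_lt_card := Fintype.one_lt_card (α := F)
  rcases eq_or_ne β 0 with rfl | hβ
  · rw [orderOf_zero]
    omega
  · have := orderOf_le_of_pow_eq_one (by omega) (FiniteField.pow_card_sub_one_eq_one β hβ)
    omega

open IntermediateField in
lemma adjoin_simple_eq_top_of_natCard_lt {K F : Type*} [Field K] [Field F] [Algebra K F] [Finite F]
    {β : F} (hβ : Nat.card F < (orderOf β + 1) ^ 2) : K⟮β⟯ = ⊤ := by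
  have orderOf_lt : orderOf β < Nat.card K⟮β⟯ := by
    have orderOf_gen : orderOf β = orderOf (AdjoinSimple.gen K β) :=
      orderOf_injective (K⟮β⟯.val : K⟮β⟯ →* F) K⟮β⟯.val.injective (AdjoinSimple.gen K β)
    rw [orderOf_gen]
    exact orderOf_lt_natCard _
  have finrank_lt : Module.finrank K⟮β⟯ F < 2 := by
    rw [← Nat.pow_lt_pow_iff_right (Finite.one_lt_card (α := K⟮β⟯)),
      ← Module.natCard_eq_pow_finrank]
    exact hβ.trans_le (Nat.pow_le_pow_left orderOf_lt 2)
  have finrank_pos : 0 < Module.finrank K⟮β⟯ F := Module.finrank_pos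
  exact finrank_eq_one_iff_eq_top.1 (by omega)

lemma range_pow_fin_eq_powers {M : Type*} [Monoid M] {β : M} {n : ℕ} (hn : 0 < n)
    (hβ : β ^ n = 1) : Set.range (fun i : Fin n ↦ β ^ (i : ℕ)) = Submonoid.powers β := by
  ext x
  constructor
  · rintro ⟨i, rfl⟩
    exact ⟨i, rfl⟩
  · rintro ⟨k, rfl⟩
    exact ⟨⟨k % n, Nat.mod_lt k hn⟩, (pow_eq_pow_mod k hβ).symm⟩

lemma exists_fin_pow_eq_pow {F : Type*} [Field F] [Finite F] {m n : ℕ} (hF : Nat.card F = m * n + 1)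
    {β z : F} (hβ : IsPrimitiveRoot β n) (hz : z ≠ 0) : ∃ i : Fin n, β ^ (i : ℕ) = z ^ m := by
  have := Fintype.ofFinite F
  have one_lt_card := Finite.one_lt_card (α := F)
  have : NeZero n := ⟨by rintro rfl; omega⟩
  have pow_mul_eq_one : (z ^ m) ^ n = 1 := by
    rw [← pow_mul, ← Nat.add_sub_cancel (m * n) 1, ← hF, Nat.card_eq_fintype_card]
    exact FiniteField.pow_card_sub_one_eq_one z hz
  obtain ⟨i, hi, h⟩ := hβ.eq_pow_of_pow_eq_one pow_mul_eq_one
  exact ⟨⟨i, hi⟩, h⟩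

lemma minDist_eq_hammingNorm {N : ℕ} {C : Submodule (ZMod 2) (Fin N → ZMod 2)}
    {c : Fin N → ZMod 2} (hc : c ∈ C) (hc₀ : c ≠ 0)
    (hmin : ∀ d ∈ C, d ≠ 0 → hammingNorm c ≤ hammingNorm d) : minDist C = hammingNorm c := by
  refine IsLeast.csInf_eq ⟨⟨c, hc, hc₀, rfl⟩, ?_⟩
  rintro _ ⟨d, hd, hd₀, rfl⟩
  exact hmin d hd hd₀

namespace BCHCode

variable {F : Type} [Field F] [Algebra (ZMod 2) F] {n : ℕ} {β : F}

lemma mem_iff_sum_eq_zero {c : Fin n → ZMod 2} :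
    c ∈ BCHCode n β {1} ↔ ∑ i, c i • β ^ (i : ℕ) = 0 := by
  change (∀ j ∈ ({1} : Finset ℕ), ∑ i : Fin n, c i • β ^ (j * (i : ℕ)) = 0) ↔ _
  simp

lemma eq_ker_linearCombination :
    BCHCode n β {1} =
      LinearMap.ker (Fintype.linearCombination (ZMod 2) fun i : Fin n ↦ β ^ (i : ℕ)) := by
  ext c
  rw [mem_iff_sum_eq_zero, LinearMap.mem_ker, Fintype.linearCombination_apply]

open IntermediateField in
theorem finrank_add_finrank_adjoin (hn : 0 < n) (hβ : β ^ n = 1) :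
    Module.finrank (ZMod 2) (BCHCode n β {1}) + Module.finrank (ZMod 2) (ZMod 2)⟮β⟯ = n := by
  have hint : IsIntegral (ZMod 2) β := .of_pow hn (hβ ▸ isIntegral_one)
  have range_eq : LinearMap.range
      (Fintype.linearCombination (ZMod 2) fun i : Fin n ↦ β ^ (i : ℕ)) =
      Subalgebra.toSubmodule (ZMod 2)⟮β⟯.toSubalgebra := by
    rw [Fintype.range_linearCombination, range_pow_fin_eq_powers hn hβ,
      adjoin_simple_toSubalgebra_of_isAlgebraic hint.isAlgebraic, Algebra.adjoin_eq_span,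
      Submonoid.powers_eq_closure]
  have h := LinearMap.finrank_range_add_finrank_ker
    (Fintype.linearCombination (ZMod 2) fun i : Fin n ↦ β ^ (i : ℕ))
  rw [range_eq, ← eq_ker_linearCombination, Module.finrank_fin_fun, add_comm] at h
  exact h

lemma mem_iff_sum_support_eq_zero {c : Fin n → ZMod 2} :
    c ∈ BCHCode n β {1} ↔ ∑ i with c i ≠ 0, β ^ (i : ℕ) = 0 := by
  have smul_eq_ite (a : ZMod 2) (x : F) : a • x = if a ≠ 0 then x else 0 := by
    have : a = 0 ∨ a = 1 := by decide +revert
    rcases this with rfl | rfl <;> simp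
  simp only [mem_iff_sum_eq_zero, sum_filter, smul_eq_ite]

theorem three_le_hammingNorm (hβ : n ≤ orderOf β) {c : Fin n → ZMod 2}
    (hc : c ∈ BCHCode n β {1}) (hc₀ : c ≠ 0) : 3 ≤ hammingNorm c := by
  have : CharP F 2 := charP_of_injective_algebraMap' (ZMod 2) 2
  rw [mem_iff_sum_support_eq_zero] at hc
  have norm_ne_zero : hammingNorm c ≠ 0 := by rwa [Ne, hammingNorm_eq_zero]
  have norm_ne_one : hammingNorm c ≠ 1 := fun h ↦ by
    obtain ⟨i, hi⟩ := card_eq_one.1 h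
    rw [hi, sum_singleton] at hc
    have : β = 0 := eq_zero_of_pow_eq_zero hc
    rw [this, orderOf_zero] at hβ
    exact i.pos.not_ge hβ
  have norm_ne_two : hammingNorm c ≠ 2 := fun h ↦ by
    obtain ⟨i, j, hij, hs⟩ := card_eq_two.1 h
    rw [hs, sum_pair hij, CharTwo.add_eq_zero] at hc
    exact hij (Fin.ext (pow_injOn_Iio_orderOf (i.2.trans_le hβ) (j.2.trans_le hβ) hc))
  omega

theorem exists_hammingNorm_eq_card {s : Finset (Fin n)} (hs : ∑ i ∈ s, β ^ (i : ℕ) = 0) :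
    ∃ c ∈ BCHCode n β {1}, hammingNorm c = #s := by
  let c : Fin n → ZMod 2 := fun i ↦ if i ∈ s then 1 else 0
  have support_eq : ({i | c i ≠ 0} : Finset (Fin n)) = s := by ext; simp [c]
  exact ⟨c, by rwa [mem_iff_sum_support_eq_zero, support_eq], congrArg card support_eq⟩

theorem exists_hammingNorm_eq_three (hβ : β ≠ 0) {i j k : Fin n}
    (hijk : β ^ (i : ℕ) + β ^ (j : ℕ) + β ^ (k : ℕ) = 0) :
    ∃ c ∈ BCHCode n β {1}, hammingNorm c = 3 := by
  have : CharP F 2 := charP_of_injective_algebraMap' (ZMod 2) 2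
  have hij : i ≠ j := by
    rintro rfl
    exact pow_ne_zero _ hβ (by simpa [CharTwo.add_self_eq_zero] using hijk)
  have hik : i ≠ k := by
    rintro rfl
    exact pow_ne_zero _ hβ (by simpa [add_right_comm, CharTwo.add_self_eq_zero] using hijk)
  have hjk : j ≠ k := by
    rintro rfl
    exact pow_ne_zero _ hβ (by simpa [add_assoc, CharTwo.add_self_eq_zero] using hijk)
  rw [← card_eq_three.2 ⟨i, j, k, hij, hik, hjk, rfl⟩]
  exact exists_hammingNorm_eq_card (by
    rw [sum_insert (by simp [hij, hik]), sum_pair hjk, ← add_assoc, hijk])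

theorem minDist_eq_three [Finite F] (hF : 16 < Nat.card F) (hn : Nat.card F = 3 * n + 1)
    (hβ : IsPrimitiveRoot β n) : minDist (BCHCode n β {1}) = 3 := by
  have : CharP F 2 := charP_of_injective_algebraMap' (ZMod 2) 2
  have : NeZero n := ⟨by omega⟩
  obtain ⟨ω, hω⟩ : ∃ ω : F, IsPrimitiveRoot ω 3 := by
    obtain ⟨u, hu⟩ := exists_prime_orderOf_dvd_card' (G := Fˣ) 3 (by simp [Nat.card_units, hn])
    exact ⟨u, IsPrimitiveRoot.coe_units_iff.2 (hu ▸ .orderOf u)⟩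
  obtain ⟨x, y, hx, hy, hxy⟩ := exists_cube_add_cube_eq_one hF hω
  obtain ⟨i, hi⟩ := exists_fin_pow_eq_pow hn hβ hx
  obtain ⟨j, hj⟩ := exists_fin_pow_eq_pow hn hβ hy
  have sum_eq_zero : β ^ (i : ℕ) + β ^ (j : ℕ) + β ^ ((0 : Fin n) : ℕ) = 0 := by
    rw [hi, hj, hxy, Fin.val_zero, pow_zero, CharTwo.add_self_eq_zero]
  obtain ⟨c, hc, hc₃⟩ := exists_hammingNorm_eq_three (hβ.ne_zero (NeZero.ne n)) sum_eq_zero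
  rw [← hc₃]
  refine minDist_eq_hammingNorm hc (hammingNorm_ne_zero_iff.1 (by omega)) fun d hd hd₀ ↦ ?_
  rw [hc₃]
  exact three_le_hammingNorm hβ.eq_orderOf.le hd hd₀

end BCHCode

lemma three_dvd_four_pow_sub_one (s : ℕ) : 3 ∣ 4 ^ s - 1 := by
  simpa using Nat.sub_dvd_pow_sub_pow 4 1 s

theorem stmt_14_general {F : Type} [Field F] [Algebra (ZMod 2) F] {s : ℕ} (hs : 3 ≤ s)
    (hF : Module.finrank (ZMod 2) F = 2 * s) {n : ℕ} (hn : n = (4 ^ s - 1) / 3) {β : F}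
    (hβ : IsPrimitiveRoot β n) :
    Module.finrank (ZMod 2) (BCHCode n β {1}) = n - 2 * s ∧ minDist (BCHCode n β {1}) = 3 := by
  have : Module.Finite (ZMod 2) F := Module.finite_of_finrank_pos (by omega)
  have : Finite F := Module.finite_of_finite (ZMod 2)
  have card_eq : Nat.card F = 4 ^ s := by
    rw [Module.natCard_eq_pow_finrank (K := ZMod 2), hF, Nat.card_zmod, pow_mul,
      show 2 ^ 2 = 4 by rfl]
  have four_pow_le : 4 ^ 3 ≤ 4 ^ s := Nat.pow_le_pow_right (by norm_num) hs
  have four_pow_eq : 4 ^ s = 3 * n + 1 := by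
    rw [hn, Nat.mul_div_cancel' (three_dvd_four_pow_sub_one s)]
    omega
  have adjoin_eq_top : IntermediateField.adjoin (ZMod 2) {β} = ⊤ := by
    apply adjoin_simple_eq_top_of_natCard_lt
    rw [card_eq, four_pow_eq, ← hβ.eq_orderOf]
    nlinarith
  have finrank_add := BCHCode.finrank_add_finrank_adjoin (by omega) hβ.pow_eq_one
  rw [adjoin_eq_top, IntermediateField.finrank_top', hF] at finrank_add
  exact ⟨by omega, BCHCode.minDist_eq_three (by omega) (card_eq.trans four_pow_eq) hβ⟩

theorem stmt_14 (s : ℕ) (hs : 4 ≤ s) (n : ℕ) (hn : n = (4 ^ s - 1) / 3)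
    (α : GaloisField 2 (2 * s)) (hα : orderOf α = 2 ^ (2 * s) - 1)
    (β : GaloisField 2 (2 * s)) (hβ : β = α ^ (3)) :
    Module.finrank (ZMod 2) (BCHCode n β {1}) = n - 2 * s ∧
    minDist (BCHCode n β {1}) = 3 := by
  have hα' : IsPrimitiveRoot α (4 ^ s - 1) := by
    simpa [hα, pow_mul] using IsPrimitiveRoot.orderOf α
  exact stmt_14_general (by omega) (GaloisField.finrank 2 (by omega)) hn
    (hβ ▸ hn ▸ hα'.pow_of_dvd three_ne_zero (three_dvd_four_pow_sub_one s))
end
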